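/- Let P be a complete calculation of the recompute-restricted red-blue pebble game on a CDAG C = (I, V, E, O) using at most S red pebbles, and let P' be a consecutive subsequence of the moves of P containing at most S moves of type R1. Let V' be the set of vertices fired by rule R3-NR during P'. Then |In(V')| ≤ 2S, where In(V') is the set of vertices of V ∖ V' having at least one successor in V'. -/

import Mathlib

/-!
Red-blue pebble game on computational DAGs (Hong & Kung), following
"On Characterizing the Data Access Complexity of Programs".

A CDAG is given by a vertex type `V`, an edge relation `E : V → V → Prop`
(required acyclic where relevant), an input set `I : Finset V` and an output
set `O : Finset V`.
-/

/-- A move of the red-blue pebble game. -/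
inductive Move (V : Type*) where
  | input : V → Move V
  | output : V → Move V
  | compute : V → Move V
  | delete : V → Move V
deriving DecidableEq

namespace Move

variable {V : Type*}

/-- The vertex involved in a move. -/
def vertex : Move V → V
  | .input v => v
  | .output v => v
  | .compute v => v
  | .delete v => v

/-- Is the move an I/O move (rule R1 or R2)? -/
def isIO : Move V → Bool
  | .input _ => true
  | .output _ => true
  | _ => false

/-- Is the move an R1 (input) move? -/
def isInput : Move V → Bool
  | .input _ => true
  | _ => false

/-- Is the move an R2 (output) move? -/
def isOutput : Move V → Bool
  | .output _ => true
  | _ => false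

end Move

/-- A configuration of the game: the sets of vertices carrying red resp. blue pebbles. -/
structure Config (V : Type*) where
  red : Finset V
  blue : Finset V

variable {V : Type*} [DecidableEq V]

/-- The effect of a move on a configuration. -/
def applyMove (c : Config V) : Move V → Config V
  | .input v => ⟨insert v c.red, c.blue⟩
  | .output v => ⟨c.red, insert v c.blue⟩
  | .compute v => ⟨insert v c.red, c.blue⟩
  | .delete v => ⟨c.red.erase v, c.blue⟩

/-- Validity of a single move in a configuration:
R1 requires a blue pebble, R2 a red pebble, R3 (compute) requires `v ∉ I` and red pebbles
on all immediate predecessors, R4 requires a red pebble. -/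
def ValidMove (E : V → V → Prop) (I : Finset V) (c : Config V) : Move V → Prop
  | .input v => v ∈ c.blue
  | .output v => v ∈ c.red
  | .compute v => v ∉ I ∧ ∀ u, E u v → u ∈ c.red
  | .delete v => v ∈ c.red

/-- Validity of a sequence of moves starting from a configuration, with at most `S`
red pebbles in use at any time. -/
def ValidSeq (E : V → V → Prop) (I : Finset V) (S : ℕ) : List (Move V) → Config V → Prop
  | [], _ => True
  | m :: ms, c => ValidMove E I c m ∧ (applyMove c m).red.card ≤ S ∧
      ValidSeq E I S ms (applyMove c m)

/-- The initial configuration: a blue pebble on each input vertex, no red pebbles. -/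
def initConfig (I : Finset V) : Config V := ⟨∅, I⟩

/-- The configuration after playing the whole sequence of moves. -/
def finalConfig (I : Finset V) (P : List (Move V)) : Config V := P.foldl applyMove (initConfig I)

/-- The I/O cost of a calculation: the number of R1 and R2 moves. -/
def ioCost {V : Type*} (P : List (Move V)) : ℕ := (P.filter Move.isIO).length

/-- A complete calculation of the (standard Hong–Kung) red-blue pebble game with at most
`S` red pebbles: a valid sequence of moves from the initial configuration ending with
blue pebbles on all output vertices. -/
def CompleteCalc (E : V → V → Prop) (I O : Finset V) (S : ℕ) (P : List (Move V)) : Prop :=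
  ValidSeq E I S P (initConfig I) ∧ O ⊆ (finalConfig I P).blue

/-- A complete calculation of the red-blue pebble game with flexible input/output labeling,
on the CDAG with vertex set `Vt`: additionally, all moves involve vertices of `Vt` and
every non-input vertex of `Vt` is fired (rule R3) at least once. -/
def CompleteCalcFlex (Vt : Finset V) (E : V → V → Prop) (I O : Finset V) (S : ℕ)
    (P : List (Move V)) : Prop :=
  (∀ m ∈ P, m.vertex ∈ Vt) ∧
  ValidSeq E I S P (initConfig I) ∧
  (∀ v ∈ Vt, v ∉ I → Move.compute v ∈ P) ∧
  O ⊆ (finalConfig I P).blue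

/-- A complete calculation of the recompute-restricted (no-repebbling) red-blue pebble game:
every non-input vertex is fired (rule R3-NR) exactly once. -/
def CompleteCalcNR (E : V → V → Prop) (I O : Finset V) (S : ℕ) (P : List (Move V)) : Prop :=
  ValidSeq E I S P (initConfig I) ∧
  (∀ v : V, v ∉ I → P.count (Move.compute v) = 1) ∧
  O ⊆ (finalConfig I P).blue

/-- No cyclic dependence among the subsets `Vs i`: the relation
"some edge of `E` goes from a vertex of `Vs i` to a vertex of `Vs j`" (for `i ≠ j`)
generates no cycle. -/
def NoCyclicDep (E : V → V → Prop) {h : ℕ} (Vs : Fin h → Finset V) : Prop :=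
  ∀ i, ¬ Relation.TransGen (fun i j => i ≠ j ∧ ∃ u ∈ Vs i, ∃ v ∈ Vs j, E u v) i i

/-- `D` is a dominator set of `W`: every (directed) path from a vertex of `I` to a
vertex of `W` contains a vertex of `D`. -/
def Dominator (E : V → V → Prop) (I D W : Finset V) : Prop :=
  ∀ (p : List V) (hp : p ≠ []), p.Chain' E → p.head hp ∈ I → p.getLast hp ∈ W →
    ∃ v ∈ p, v ∈ D

/-- The minimum set of `W`: the vertices of `W` all of whose successors lie outside `W`. -/
def MinSet (E : V → V → Prop) (W : Finset V) : Set V :=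
  {v | v ∈ W ∧ ∀ u, E v u → u ∉ W}

/-- The input set of `W`: vertices outside `W` with at least one successor in `W`. -/
def InSet (E : V → V → Prop) (W : Set V) : Set V := {u | u ∉ W ∧ ∃ v ∈ W, E u v}

/-- The output set of `W`: vertices of `W` that belong to `O` or have a successor
outside `W`. -/
def OutSet (E : V → V → Prop) (O : Finset V) (W : Set V) : Set V :=
  {v | v ∈ W ∧ (v ∈ O ∨ ∃ u, E v u ∧ u ∉ W)}

variable [Fintype V]

/-- A `T`-partition of the CDAG (Hong & Kung): pairwise disjoint subsets covering `V`,
with no cyclic dependence, each having a dominator set of at most `T` vertices and a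
minimum set of at most `T` vertices. -/
def TPartition (E : V → V → Prop) (I : Finset V) (T : ℕ) {h : ℕ}
    (Vs : Fin h → Finset V) : Prop :=
  (∀ i j, i ≠ j → Disjoint (Vs i) (Vs j)) ∧
  (Finset.univ.biUnion Vs = Finset.univ) ∧
  NoCyclicDep E Vs ∧
  (∀ i, ∃ D : Finset V, D.card ≤ T ∧ Dominator E I D (Vs i)) ∧
  (∀ i, (MinSet E (Vs i)).ncard ≤ T)

/-- A `T`-NR-partition of the CDAG: pairwise disjoint subsets covering `V ∖ I`,
with no cyclic dependence, each having input set and output set of at most `T` vertices. -/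
def TNRPartition (E : V → V → Prop) (I O : Finset V) (T : ℕ) {h : ℕ}
    (Vs : Fin h → Finset V) : Prop :=
  (∀ i j, i ≠ j → Disjoint (Vs i) (Vs j)) ∧
  (Finset.univ.biUnion Vs = Finset.univ \ I) ∧
  NoCyclicDep E Vs ∧
  (∀ i, (InSet E (↑(Vs i) : Set V)).ncard ≤ T) ∧
  (∀ i, (OutSet E O (↑(Vs i) : Set V)).ncard ≤ T)

/-- A valid sequence splits along concatenation; the red set in between has at most `S` pebbles. -/
theorem validSeq_split {V : Type*} [DecidableEq V] (E : V → V → Prop) (I : Finset V) (S : ℕ)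
    (P Q : List (Move V)) : ∀ c : Config V, c.red.card ≤ S → ValidSeq E I S (P ++ Q) c →
    ∃ d : Config V, d.red.card ≤ S ∧ ValidSeq E I S Q d := by
  induction P with
  | nil => exact fun c hc h => ⟨c, hc, h⟩
  | cons m ms ih => exact fun c _ h => ih _ h.2.1 h.2.2

/-- Predecessors of a fired vertex were red at the start, or were loaded or fired. -/
theorem pred_mem {V : Type*} [DecidableEq V] (E : V → V → Prop) (I : Finset V) (S : ℕ)
    (P Q : List (Move V)) (u v : V) (huv : E u v) : ∀ c : Config V,
    ValidSeq E I S (P ++ Q) c → Move.compute v ∈ P →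
    u ∈ c.red ∨ Move.input u ∈ P ∨ Move.compute u ∈ P := by
  induction P with
  | nil => intro c _ h; simp at h
  | cons m ms ih =>
    intro c h hv
    obtain ⟨h1, _, h3⟩ := h
    rcases List.mem_cons.1 hv with rfl | hv
    · exact Or.inl (h1.2 u huv)
    · rcases ih _ h3 hv with h | h | h
      · cases m <;> simp [applyMove] at h ⊢ <;> tauto
      · exact Or.inr (Or.inl (List.mem_cons_of_mem _ h))
      · exact Or.inr (Or.inr (List.mem_cons_of_mem _ h))

/-- If `P'` is a consecutive subsequence of a complete calculation of the
recompute-restricted game with at most `S` red pebbles, containing at most `S` moves of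
type R1, and `V'` is the set of vertices fired during `P'`, then `|In(V')| ≤ 2S`. -/
theorem stmt6 {V : Type*} [Fintype V] [DecidableEq V]
    (E : V → V → Prop) (I O : Finset V)
    (hdag : ∀ v : V, ¬ Relation.TransGen E v v)
    (S : ℕ) (pre P' post : List (Move V))
    (hP : CompleteCalcNR E I O S (pre ++ P' ++ post))
    (hR1 : (P'.filter Move.isInput).length ≤ S) :
    (InSet E {v : V | Move.compute v ∈ P'}).ncard ≤ 2 * S := by
  obtain ⟨hv, -, -⟩ := hP
  rw [List.append_assoc] at hv
  obtain ⟨c, hc, hs⟩ := validSeq_split E I S pre (P' ++ post) (initConfig I)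
    (by simp [initConfig]) hv
  have hsub : InSet E {v : V | Move.compute v ∈ P'} ⊆
      ((c.red ∪ ((P'.filter Move.isInput).map Move.vertex).toFinset : Finset V) : Set V) := by
    rintro u ⟨hu, v, hvP, huv⟩
    rw [Finset.mem_coe, Finset.mem_union]
    rcases pred_mem E I S P' post u v huv c hs hvP with h | h | h
    · exact Or.inl h
    · refine Or.inr (List.mem_toFinset.2 (List.mem_map.2 ⟨Move.input u, ?_, rfl⟩))
      exact List.mem_filter.2 ⟨h, rfl⟩
    · exact absurd h hu
  have h1 := Set.ncard_le_ncard hsub (Finset.finite_toSet _)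
  rw [Set.ncard_coe_finset] at h1
  have h2 := Finset.card_union_le c.red ((P'.filter Move.isInput).map Move.vertex).toFinset
  have h3 := List.toFinset_card_le ((P'.filter Move.isInput).map Move.vertex)
  rw [List.length_map] at h3
  omega
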